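/- Let T be a finite tree with at least three vertices. If the domination subdivision number of T equals 3 (i.e., sd(T) = 3), then T is a general corona of a tree. -/

import Mathlib

open SimpleGraph

namespace GenCorona

universe u

/-- A vertex neighborhood partition of a graph `G`: for every vertex `v`, a partition
of the open neighborhood `N_G(v)` into nonempty sets. -/
structure NbhdPartition {V : Type u} (G : SimpleGraph V) where
  part : V → Set (Set V)
  nonempty : ∀ v : V, ∀ A ∈ part v, A.Nonempty
  subset_nbhd : ∀ v : V, ∀ A ∈ part v, A ⊆ G.neighborSet v
  covers : ∀ v : V, ∀ u ∈ G.neighborSet v, ∃ A ∈ part v, u ∈ A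
  eq_of_inter : ∀ v : V, ∀ A ∈ part v, ∀ B ∈ part v, (A ∩ B).Nonempty → A = B

variable {V : Type u}

/-- The vertex type of the general corona `G ∘ 𝒫`: external vertices `(v,1)` are encoded
as `Sum.inl v`, internal vertices `(v,A)` (with `A ∈ 𝒫(v)`) as `Sum.inr ⟨(v,A), _⟩`. -/
abbrev CoronaVert (G : SimpleGraph V) (P : NbhdPartition G) : Type u :=
  V ⊕ {p : V × Set V // p.2 ∈ P.part p.1}

/-- The general corona `G ∘ 𝒫`. -/
def corona (G : SimpleGraph V) (P : NbhdPartition G) : SimpleGraph (CoronaVert G P) :=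
  SimpleGraph.fromRel fun x y =>
    match x, y with
    | Sum.inl v, Sum.inr p => v = p.val.1
    | Sum.inr p, Sum.inr q =>
        G.Adj p.val.1 q.val.1 ∧ q.val.1 ∈ p.val.2 ∧ p.val.1 ∈ q.val.2
    | _, _ => False

/-- The set of external vertices of the general corona. -/
def Ext (G : SimpleGraph V) (P : NbhdPartition G) : Set (CoronaVert G P) :=
  Set.range Sum.inl

/-- A graph is a general corona of a tree if it is isomorphic to `T ∘ 𝒫` for some finite
tree `T` and some vertex neighborhood partition `𝒫` of `T`. -/
def IsGeneralCoronaOfTree {W : Type*} (H : SimpleGraph W) : Prop :=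
  ∃ (n : ℕ) (T : SimpleGraph (Fin n)) (P : NbhdPartition T),
    T.IsTree ∧ Nonempty (H ≃g corona T P)

/-- A graph `H` is a general corona of a tree with external vertex set `E`. -/
def IsGenCoronaWithExt {W : Type*} (H : SimpleGraph W) (E : Set W) : Prop :=
  ∃ (n : ℕ) (T : SimpleGraph (Fin n)) (P : NbhdPartition T),
    T.IsTree ∧ ∃ f : H ≃g corona T P, E = ⇑f ⁻¹' Ext T P

/-- `D` is a dominating set of `G`. -/
def IsDominating (G : SimpleGraph V) (D : Set V) : Prop :=
  ∀ v ∉ D, ∃ u ∈ D, G.Adj v u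

/-- `S` is a 2-packing of `G`: any two distinct vertices of `S` are at distance
greater than 2 (where the extended distance of unreachable vertices is `⊤`). -/
def Is2Packing (G : SimpleGraph V) (S : Set V) : Prop :=
  ∀ u ∈ S, ∀ v ∈ S, u ≠ v → 2 < G.edist u v

/-- A leaf is a vertex of degree 1, i.e. with exactly one neighbor. -/
def IsLeaf (G : SimpleGraph V) (v : V) : Prop :=
  (G.neighborSet v).ncard = 1

/-- The domination number: the minimum size of a dominating set. -/
noncomputable def dominationNumber (G : SimpleGraph V) : ℕ :=
  sInf {n : ℕ | ∃ D : Set V, IsDominating G D ∧ D.ncard = n}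

/-- The graph obtained from `G` by subdividing every edge in `F` (each once):
for each `e ∈ F` a new vertex `Sum.inr e` replaces the edge `e` by a path of length two. -/
def subdivide (G : SimpleGraph V) (F : Set (Sym2 V)) : SimpleGraph (V ⊕ F) :=
  SimpleGraph.fromRel fun x y =>
    match x, y with
    | Sum.inl u, Sum.inl v => G.Adj u v ∧ s(u, v) ∉ F
    | Sum.inl u, Sum.inr e => u ∈ e.val
    | _, _ => False

/-- The domination subdivision number `sd(G)`: the minimum number of edges which must be
subdivided (each edge at most once) in order to increase the domination number. -/
noncomputable def sd (G : SimpleGraph V) : ℕ :=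
  sInf {k : ℕ | ∃ F : Set (Sym2 V), F ⊆ G.edgeSet ∧ F.ncard = k ∧
    dominationNumber G < dominationNumber (subdivide G F)}

/-- The corona `G ∘ K₁`: attach one new pendant vertex `Sum.inr v` to each vertex
`Sum.inl v` of `G`. -/
def coronaK1 (G : SimpleGraph V) : SimpleGraph (V ⊕ V) :=
  SimpleGraph.fromRel fun x y =>
    match x, y with
    | Sum.inl u, Sum.inl w => G.Adj u w
    | Sum.inl u, Sum.inr w => u = w
    | _, _ => False

/-- The 2-subdivision `S₂(G)`: every edge `uv` is replaced by a path `(u, x₁, x₂, v)`;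
the new vertex `Sum.inr ⟨(u,v), _⟩` is the subdivision vertex adjacent to `u`. -/
def twoSubdivision (G : SimpleGraph V) : SimpleGraph (V ⊕ {p : V × V // G.Adj p.1 p.2}) :=
  SimpleGraph.fromRel fun x y =>
    match x, y with
    | Sum.inl u, Sum.inr p => u = p.val.1
    | Sum.inr p, Sum.inr q => p.val.1 = q.val.2 ∧ p.val.2 = q.val.1
    | _, _ => False

/-- `𝒫'` is a refinement of `𝒫`. -/
def Refines {G : SimpleGraph V} (P' P : NbhdPartition G) : Prop :=
  ∀ v : V, ∀ A ∈ P'.part v, ∃ B ∈ P.part v, A ⊆ B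

/-- The graph obtained by contracting the two vertices `x` and `y` of `G` to the single
vertex `x` (the vertex `y` is removed, and `x` becomes adjacent to all former
neighbors of `y`). -/
def contractPair {W : Type*} (G : SimpleGraph W) (x y : W) :
    SimpleGraph {w : W // w ≠ y} :=
  SimpleGraph.fromRel fun a b =>
    G.Adj a.val b.val ∨ (a.val = x ∧ G.Adj y b.val) ∨ (b.val = x ∧ G.Adj a.val y)

/-- The graph obtained from `G` by attaching a path `(x, y, z)` (encoded as
`Sum.inr 0, Sum.inr 1, Sum.inr 2`) to the vertex `v` via the edge `v x`. -/
def attachPath3 {W : Type*} (G : SimpleGraph W) (v : W) : SimpleGraph (W ⊕ Fin 3) :=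
  SimpleGraph.fromRel fun a b =>
    match a, b with
    | Sum.inl u, Sum.inl w => G.Adj u w
    | Sum.inl u, Sum.inr i => u = v ∧ i = 0
    | Sum.inr i, Sum.inr j => (i = 0 ∧ j = 1) ∨ (i = 1 ∧ j = 2)
    | _, _ => False

/-- The graph obtained from `G` by attaching a path `(x, y)` (encoded as
`Sum.inr 0, Sum.inr 1`) to the vertex `v` via the edge `v x`. -/
def attachPath2 {W : Type*} (G : SimpleGraph W) (v : W) : SimpleGraph (W ⊕ Fin 2) :=
  SimpleGraph.fromRel fun a b =>
    match a, b with
    | Sum.inl u, Sum.inl w => G.Adj u w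
    | Sum.inl u, Sum.inr i => u = v ∧ i = 0
    | Sum.inr i, Sum.inr j => i = 0 ∧ j = 1
    | _, _ => False

/-- The family `𝓕` of labeled trees; the label of a vertex is `A` when it belongs to the
distinguished set `L`, and `B` otherwise.  The family contains the labeled path `P₄`
(leaves labeled `A`, support vertices labeled `B`) and is closed under the two
attachment operations. -/
inductive LabF : ∀ {W : Type}, SimpleGraph W → Set W → Prop where
  | base : LabF (SimpleGraph.pathGraph 4) ({0, 3} : Set (Fin 4))
  | opA {W : Type} {G : SimpleGraph W} {L : Set W} (v : W) :
      LabF G L → v ∈ L →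
        LabF (attachPath3 G v) (Sum.inl '' L ∪ {Sum.inr (2 : Fin 3)})
  | opB {W : Type} {G : SimpleGraph W} {L : Set W} (v : W) :
      LabF G L → v ∉ L →
        LabF (attachPath2 G v) (Sum.inl '' L ∪ {Sum.inr (1 : Fin 2)})

/-- A tree `T` belongs to the family `𝓕` if it admits a labeling constructed by the
above rules, i.e. it is isomorphic to a member of the inductively generated family. -/
def MemF {W : Type*} (T : SimpleGraph W) : Prop :=
  ∃ (W' : Type) (G : SimpleGraph W') (L : Set W'), LabF G L ∧ Nonempty (T ≃g G)

/-- The closed neighborhood of a vertex. -/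
def closedNbhd (G : SimpleGraph V) (v : V) : Set V :=
  insert v (G.neighborSet v)

lemma mem_closedNbhd {G : SimpleGraph V} {v w : V} :
    w ∈ closedNbhd G v ↔ w = v ∨ G.Adj v w :=
  Iff.rfl

/-- Distinct vertices of `S` have disjoint closed neighborhoods. -/
def IsNbhdPacking (G : SimpleGraph V) (S : Set V) : Prop :=
  ∀ ⦃x⦄, x ∈ S → ∀ ⦃y⦄, y ∈ S → ∀ ⦃z⦄, z ∈ closedNbhd G x → z ∈ closedNbhd G y → x = y

lemma IsNbhdPacking.ncard_le [Finite V] {G : SimpleGraph V} {S D : Set V}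
    (hS : IsNbhdPacking G S) (hD : IsDominating G D) : S.ncard ≤ D.ncard := by
  have h : ∀ x, ∃ z ∈ D, z ∈ closedNbhd G x := by
    intro x
    by_cases hx : x ∈ D
    · exact ⟨x, hx, Or.inl rfl⟩
    · obtain ⟨z, hz, hxz⟩ := hD x hx
      exact ⟨z, hz, Or.inr hxz⟩
  choose f hfD hfN using h
  refine Set.ncard_le_ncard_of_injOn f (fun x _ => hfD x) ?_ D.toFinite
  intro x hx y hy hxy
  exact hS hx hy (hfN x) (hxy ▸ hfN y)

lemma exists_isDominating_ncard_eq (G : SimpleGraph V) :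
    ∃ D : Set V, IsDominating G D ∧ D.ncard = dominationNumber G :=
  Nat.sInf_mem (s := {n : ℕ | ∃ D : Set V, IsDominating G D ∧ D.ncard = n})
    ⟨_, Set.univ, fun v hv => (hv (Set.mem_univ v)).elim, rfl⟩

lemma IsDominating.dominationNumber_le {G : SimpleGraph V} {D : Set V}
    (hD : IsDominating G D) : dominationNumber G ≤ D.ncard :=
  Nat.sInf_le ⟨D, hD, rfl⟩

lemma IsNbhdPacking.ncard_le_dominationNumber [Finite V] {G : SimpleGraph V} {S : Set V}
    (hS : IsNbhdPacking G S) : S.ncard ≤ dominationNumber G := by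
  obtain ⟨D, hD, hcard⟩ := exists_isDominating_ncard_eq G
  exact hcard ▸ hS.ncard_le hD

lemma IsTree.exists_parent {G : SimpleGraph V} (hG : G.IsTree) (r x : V) :
    ∃ p ∈ closedNbhd G x, ∀ y, G.Adj x y → y = p ∨ G.dist r y = G.dist r x + 1 := by
  obtain ⟨p, hp, hpl⟩ := hG.connected.exists_path_of_dist r x
  refine ⟨p.penultimate, ?_, fun y hy => ?_⟩
  · by_cases hnil : p.Nil
    · obtain rfl := hnil.eq
      left
      simp [Walk.eq_nil_iff_nil.mpr hnil]
    · exact Or.inr (p.adj_penultimate hnil).symm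
  · by_cases hyp : y ∈ p.support
    · exact Or.inl (hG.isAcyclic.eq_penultimate_of_adj_end hp hy hyp)
    · obtain ⟨q, hq, hql⟩ := hG.connected.exists_path_of_dist r y
      have hx := hG.isAcyclic.mem_support_of_ne_mem_support_of_adj_of_isPath hq hp hy.symm hyp
      rw [← hql, hG.isAcyclic.path_concat hp hq hy hx, p.length_concat, hpl]
      exact Or.inr rfl

/-- The Meir-Moon theorem relative to a finite set `X` of vertices to be dominated. -/
lemma IsTree.exists_packing_dominating_finset {G : SimpleGraph V} (hG : G.IsTree)
    (X : Finset V) : ∃ S D : Finset V, S ⊆ X ∧ IsNbhdPacking G (S : Set V) ∧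
      (∀ x ∈ X, ∃ d ∈ D, d ∈ closedNbhd G x) ∧ D.card ≤ S.card := by
  classical
  obtain ⟨r⟩ := hG.connected.nonempty
  choose parent hparent hadj using IsTree.exists_parent hG r
  induction X using Finset.strongInduction with
  | H X ih =>
    rcases X.eq_empty_or_nonempty with rfl | hX
    · exact ⟨∅, ∅, by simp, by simp [IsNbhdPacking], by simp, le_rfl⟩
    obtain ⟨x, hxX, hmax⟩ := X.exists_max_image (G.dist r) hX
    have hss : X.filter (fun y => parent x ∉ closedNbhd G y) ⊂ X :=
      Finset.filter_ssubset.mpr ⟨x, hxX, not_not.mpr (hparent x)⟩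
    obtain ⟨S, D, hSX, hS, hD, hcard⟩ := ih _ hss
    have hdisj : ∀ y ∈ S, ∀ z, z ∈ closedNbhd G x → z ∉ closedNbhd G y := by
      intro y hy z hzx hzy
      obtain ⟨hyX, hpy⟩ := Finset.mem_filter.mp (hSX hy)
      have hle := hmax y hyX
      have hpx := hparent x
      have hxz := hadj x z
      have hxy := hadj x y
      have hzy' := hadj z y
      have hzx' := hadj z x
      have hsymm := G.adj_comm x z
      have hsymm' := G.adj_comm y z
      simp only [mem_closedNbhd] at *
      grind
    refine ⟨insert x S, insert (parent x) D, ?_, ?_, ?_, ?_⟩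
    · exact Finset.insert_subset hxX (hSX.trans (Finset.filter_subset _ _))
    · rw [Finset.coe_insert]
      rintro a (rfl | ha) b (rfl | hb) z hza hzb
      · rfl
      · exact (hdisj b hb z hza hzb).elim
      · exact (hdisj a ha z hzb hza).elim
      · exact hS ha hb hza hzb
    · intro y hy
      by_cases hpy : parent x ∈ closedNbhd G y
      · exact ⟨_, Finset.mem_insert_self _ _, hpy⟩
      · obtain ⟨d, hd, hdy⟩ := hD y (Finset.mem_filter.mpr ⟨hy, hpy⟩)
        exact ⟨d, Finset.mem_insert_of_mem hd, hdy⟩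
    · have hxS : x ∉ S := fun hx => hdisj x hx x (Or.inl rfl) (Or.inl rfl)
      rw [Finset.card_insert_of_notMem hxS]
      exact (Finset.card_insert_le _ _).trans (Nat.add_le_add_right hcard 1)

/-- In a tree the packing number equals the domination number (Meir and Moon). -/
theorem IsTree.exists_packing_ncard_eq [Fintype V] {G : SimpleGraph V} (hG : G.IsTree) :
    ∃ S : Set V, IsNbhdPacking G S ∧ S.ncard = dominationNumber G := by
  obtain ⟨S, D, -, hS, hD, hcard⟩ := IsTree.exists_packing_dominating_finset hG Finset.univ
  refine ⟨S, hS, hS.ncard_le_dominationNumber.antisymm ?_⟩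
  have hdom : IsDominating G (D : Set V) := by
    intro v hv
    obtain ⟨d, hd, rfl | hvd⟩ := hD v (Finset.mem_univ v)
    · exact (hv hd).elim
    · exact ⟨d, hd, hvd⟩
  refine hdom.dominationNumber_le.trans ?_
  simpa only [Set.ncard_coe_finset] using hcard

lemma dominationNumber_subdivide_le {G : SimpleGraph V} {F : Set (Sym2 V)}
    (hF : F ⊆ G.edgeSet) (hcard : F.ncard < sd G) :
    dominationNumber (subdivide G F) ≤ dominationNumber G := by
  by_contra! hlt
  exact (Nat.sInf_le ⟨F, hF, rfl, hlt⟩ : sd G ≤ F.ncard).not_gt hcard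

@[simp] lemma subdivide_adj_inl_inl {G : SimpleGraph V} {F : Set (Sym2 V)} {a b : V} :
    (subdivide G F).Adj (Sum.inl a) (Sum.inl b) ↔ G.Adj a b ∧ s(a, b) ∉ F := by
  simp only [subdivide, fromRel_adj, ne_eq, Sum.inl.injEq, G.adj_comm b a, Sym2.eq_swap (a := b),
    or_self]
  exact ⟨And.right, fun h => ⟨h.1.ne, h⟩⟩

@[simp] lemma subdivide_adj_inl_inr {G : SimpleGraph V} {F : Set (Sym2 V)} {a : V} {e : F} :
    (subdivide G F).Adj (Sum.inl a) (Sum.inr e) ↔ a ∈ e.val := by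
  simp [subdivide]

@[simp] lemma subdivide_adj_inr_inl {G : SimpleGraph V} {F : Set (Sym2 V)} {a : V} {e : F} :
    (subdivide G F).Adj (Sum.inr e) (Sum.inl a) ↔ a ∈ e.val := by
  simp [subdivide]

@[simp] lemma not_subdivide_adj_inr_inr {G : SimpleGraph V} {F : Set (Sym2 V)} {e f : F} :
    ¬ (subdivide G F).Adj (Sum.inr e) (Sum.inr f) := by
  simp [subdivide]

/-- If `u` is not dominated by the packing `S` but its neighbor `v` is adjacent to `s ∈ S`,
then after subdividing `uv` and `vs` the new vertex on `uv` can be added to `S`. -/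
lemma IsNbhdPacking.insert_subdivide {G : SimpleGraph V} {S : Set V} (hS : IsNbhdPacking G S)
    {u v s : V} (hu : ∀ x ∈ S, u ∉ closedNbhd G x) (hs : s ∈ S) (hvs : G.Adj v s)
    (huv : s(u, v) ∈ ({s(u, v), s(v, s)} : Set (Sym2 V))) :
    IsNbhdPacking (subdivide G {s(u, v), s(v, s)})
      (insert (Sum.inr ⟨s(u, v), huv⟩) (Sum.inl '' S)) := by
  have hvS : v ∉ S := fun hv => hvs.ne (hS hv hs (Or.inr hvs) (Or.inl rfl))
  have huS : u ∉ S := fun h => hu u h (Or.inl rfl)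
  have hus : u ≠ s := by rintro rfl; exact huS hs
  have hnew : ∀ x ∈ S, ∀ z, z ∈ closedNbhd (subdivide G {s(u, v), s(v, s)}) (Sum.inl x) →
      z ∉ closedNbhd (subdivide G {s(u, v), s(v, s)}) (Sum.inr ⟨s(u, v), huv⟩) := by
    intro x hx z hzx hz
    have hxu : x ≠ u := by rintro rfl; exact huS hx
    have hxv : x ≠ v := by rintro rfl; exact hvS hx
    have hux := hu x hx
    rcases z with z | ⟨e, rfl | rfl⟩
    · simp only [mem_closedNbhd, Sum.inl.injEq, subdivide_adj_inl_inl, reduceCtorEq, false_or,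
        subdivide_adj_inr_inl, Sym2.mem_iff] at hzx hz
      rcases hz with rfl | rfl
      · exact hux (hzx.imp_right And.left)
      · obtain rfl | ⟨hxz, hne⟩ := hzx
        · exact hxv rfl
        · obtain rfl := hS hx hs (Or.inr hxz) (Or.inr hvs.symm)
          simp [Sym2.eq_swap] at hne
    · simp [mem_closedNbhd, hxu, hxv] at hzx
    · simp [mem_closedNbhd] at hz
      grind
  have hold : ∀ x ∈ S, ∀ y ∈ S, ∀ z,
      z ∈ closedNbhd (subdivide G {s(u, v), s(v, s)}) (Sum.inl x) →
      z ∈ closedNbhd (subdivide G {s(u, v), s(v, s)}) (Sum.inl y) → x = y := by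
    intro x hx y hy z hzx hzy
    rcases z with z | ⟨e, rfl | rfl⟩
    · simp only [mem_closedNbhd, Sum.inl.injEq, subdivide_adj_inl_inl] at hzx hzy
      exact hS hx hy (hzx.imp_right And.left) (hzy.imp_right And.left)
    · simp [mem_closedNbhd] at hzx hzy
      grind
    · simp [mem_closedNbhd] at hzx hzy
      grind
  rintro x (rfl | ⟨x, hx, rfl⟩) y (rfl | ⟨y, hy, rfl⟩) z hzx hzy
  · rfl
  · exact (hnew y hy z hzy hzx).elim
  · exact (hnew x hx z hzx hzy).elim
  · exact congrArg Sum.inl (hold x hx y hy z hzx hzy)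

lemma ncard_pair_le_two {α : Type*} (a b : α) : ({a, b} : Set α).ncard ≤ 2 := by
  simpa using Set.ncard_insert_le a {b}

lemma exists_adj_mem_notMem {G : SimpleGraph V} (hG : G.Connected) {A : Set V} {a b : V}
    (ha : a ∈ A) (hb : b ∉ A) : ∃ x ∈ A, ∃ y ∉ A, G.Adj x y := by
  obtain ⟨p⟩ := hG a b
  obtain ⟨d, -, hd, hd'⟩ := p.exists_boundary_dart A ha hb
  exact ⟨d.fst, hd, d.snd, hd', d.adj⟩

/-- If no two edge subdivisions increase the domination number, then packings of
size `γ(G)` are perfect codes. -/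
lemma IsNbhdPacking.exists_mem_closedNbhd [Finite V] {G : SimpleGraph V} (hG : G.Connected)
    (hsd : 2 < sd G) {S : Set V} (hS : IsNbhdPacking G S)
    (hcard : S.ncard = dominationNumber G) (w : V) : ∃ s ∈ S, w ∈ closedNbhd G s := by
  by_contra! hw
  have hne : S.Nonempty := by
    obtain ⟨D, hD, hDcard⟩ := exists_isDominating_ncard_eq G
    have hDne : D.Nonempty := by
      by_contra! h
      obtain ⟨d, hd, -⟩ := hD w (by simp [h])
      simp [h] at hd
    rw [← Set.ncard_pos, hcard, ← hDcard, Set.ncard_pos]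
    exact hDne
  obtain ⟨s₀, hs₀⟩ := hne
  obtain ⟨v, ⟨s, hs, hvs⟩, u, hu, hvu⟩ := exists_adj_mem_notMem hG
    (A := {v | ∃ s ∈ S, v ∈ closedNbhd G s}) ⟨s₀, hs₀, Or.inl rfl⟩
    (b := w) (fun ⟨s, hs, h⟩ => hw s hs h)
  have hu' : ∀ x ∈ S, u ∉ closedNbhd G x := fun x hx h => hu ⟨x, hx, h⟩
  rcases hvs with rfl | hvs
  · exact hu' v hs (Or.inr hvu)
  have huv : s(u, v) ∈ ({s(u, v), s(v, s)} : Set (Sym2 V)) := Or.inl rfl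
  have hpack := hS.insert_subdivide hu' hs hvs.symm huv
  have hle := hpack.ncard_le_dominationNumber.trans
    (dominationNumber_subdivide_le (G := G)
      (by
        rintro e (rfl | rfl)
        · exact hvu.symm
        · exact hvs.symm)
      ((ncard_pair_le_two _ _).trans_lt hsd))
  rw [Set.ncard_insert_of_notMem (by simp), Set.ncard_image_of_injective _ Sum.inl_injective,
    hcard] at hle
  omega

/-- Packings of size `γ(G)` contain all leaves. -/
lemma IsNbhdPacking.mem_of_isLeaf [Finite V] {G : SimpleGraph V} (hG : G.Connected)
    (h3 : 3 ≤ Nat.card V) (hsd : 2 < sd G) {S : Set V} (hS : IsNbhdPacking G S)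
    (hcard : S.ncard = dominationNumber G) {l : V} (hl : IsLeaf G l) : l ∈ S := by
  by_contra hlS
  obtain ⟨w, hw⟩ := Set.ncard_eq_one.mp hl
  have hlw : ∀ x, G.Adj l x ↔ x = w := fun x => Set.ext_iff.mp hw x
  have hwl : G.Adj w l := ((hlw w).mpr rfl).symm
  have hcode := hS.exists_mem_closedNbhd hG hsd hcard
  have hwS : w ∈ S := by
    obtain ⟨s, hs, rfl | hsl⟩ := hcode l
    · exact (hlS hs).elim
    · exact (hlw s).mp hsl.symm ▸ hs
  obtain ⟨x, hxl, hwx⟩ : ∃ x, x ≠ l ∧ G.Adj w x := by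
    by_contra! hno
    obtain ⟨y, hyl, hyw⟩ : ∃ y, y ≠ l ∧ y ≠ w := by
      by_contra! hy
      have : Set.univ ⊆ ({l, w} : Set V) := fun y _ => by
        by_cases h : y = l
        · exact Or.inl h
        · exact Or.inr (hy y h)
      have := Set.ncard_le_ncard this
      have := ncard_pair_le_two l w
      rw [Set.ncard_univ] at *
      omega
    obtain ⟨a, ha, b, hb, hab⟩ := exists_adj_mem_notMem hG (A := {l, w}) (Or.inl rfl)
      (b := y) (by simp [hyl, hyw])
    rcases ha with rfl | rfl
    · exact hb (Or.inr ((hlw b).mp hab))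
    · exact hb (Or.inl (by_contra fun h => hno b h hab))
  have hS' : IsNbhdPacking G (insert l (S \ {w})) := by
    have hkey : ∀ y ∈ S \ {w}, ∀ z, z ∈ closedNbhd G l → z ∉ closedNbhd G y := by
      rintro y ⟨hy, hyw⟩ z hzl hzy
      have hzw : z ∈ closedNbhd G w := by
        rcases hzl with rfl | hzl
        · exact Or.inr hwl
        · exact Or.inl ((hlw z).mp hzl)
      exact hyw (hS hy hwS hzy hzw)
    rintro a (rfl | ha) b (rfl | hb) z hza hzb
    · rfl
    · exact (hkey b hb z hza hzb).elim
    · exact (hkey a ha z hzb hza).elim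
    · exact hS ha.1 hb.1 hza hzb
  have hcard' : (insert l (S \ {w})).ncard = dominationNumber G := by
    rw [Set.ncard_insert_of_notMem (fun h => hlS h.1), Set.ncard_sdiff_singleton_add_one hwS, hcard]
  obtain ⟨s, rfl | ⟨hs, hsw⟩, hsx⟩ := hS'.exists_mem_closedNbhd hG hsd hcard' x
  · rcases hsx with rfl | hsx
    · exact hxl rfl
    · exact hwx.ne ((hlw x).mp hsx).symm
  · exact hsw (hS hs hwS hsx (Or.inr hwx))

/-- A perfect code `c : ι → V` of a graph, with `φ` sending a vertex to its center. -/
structure PerfectCode {ι : Type*} (G : SimpleGraph V) (c : ι → V) (φ : V → ι) : Prop where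
  mem_iff : ∀ w i, w ∈ closedNbhd G (c i) ↔ φ w = i

namespace PerfectCode

variable {ι : Type*} {G : SimpleGraph V} {c : ι → V} {φ : V → ι}

lemma apply_center (h : PerfectCode G c φ) (i : ι) : φ (c i) = i :=
  (h.mem_iff _ _).mp (Or.inl rfl)

lemma adj_center (h : PerfectCode G c φ) {w : V} (hw : w ≠ c (φ w)) : G.Adj (c (φ w)) w :=
  ((h.mem_iff w _).mpr rfl).resolve_left hw

lemma apply_eq_of_adj (h : PerfectCode G c φ) {i : ι} {w : V} (hw : G.Adj (c i) w) : φ w = i :=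
  (h.mem_iff w i).mp (Or.inr hw)

/-- The graph obtained by contracting every closed neighborhood of the code. -/
def quotientGraph (G : SimpleGraph V) (φ : V → ι) : SimpleGraph ι :=
  SimpleGraph.fromRel fun i j => ∃ a b, G.Adj a b ∧ φ a = i ∧ φ b = j

lemma quotientGraph_adj {i j : ι} : (quotientGraph G φ).Adj i j ↔
    i ≠ j ∧ ∃ a b, G.Adj a b ∧ φ a = i ∧ φ b = j := by
  simp only [quotientGraph, fromRel_adj]
  refine and_congr_right fun _ => ⟨?_, Or.inl⟩
  rintro (h | ⟨a, b, hab, ha, hb⟩)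
  · exact h
  · exact ⟨b, a, hab.symm, hb, ha⟩

/-- Closed neighborhoods of the code stay connected after removing an edge that avoids
the code. -/
lemma reachable_deleteEdges (h : PerfectCode G c φ) {a b : V} (ha : a ≠ c (φ a))
    (hb : b ≠ c (φ b)) {x y : V} (hxy : φ x = φ y) :
    (G.deleteEdges {s(a, b)}).Reachable x y := by
  have hcenter : ∀ w, (G.deleteEdges {s(a, b)}).Reachable (c (φ w)) w := by
    intro w
    by_cases hw : w = c (φ w)
    · rw [← hw]
    · refine Adj.reachable ?_
      rw [deleteEdges_adj]
      refine ⟨h.adj_center hw, fun he => ?_⟩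
      have := h.apply_center (φ w)
      rcases Sym2.eq_iff.mp he with ⟨h1, -⟩ | ⟨h1, -⟩
      · exact ha (by rw [← h1, this])
      · exact hb (by rw [← h1, this])
  exact (hcenter x).symm.trans (hxy ▸ hcenter y)

lemma not_reachable_deleteEdges (hG : G.IsAcyclic) {a b : V} (hab : G.Adj a b) :
    ¬ (G.deleteEdges {s(a, b)}).Reachable a b :=
  isAcyclic_iff_forall_adj_isBridge.mp hG hab

lemma ne_center_left (h : PerfectCode G c φ) {a b : V} (hab : G.Adj a b) (hne : φ a ≠ φ b) :
    a ≠ c (φ a) :=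
  fun ha => hne (h.apply_eq_of_adj (ha ▸ hab)).symm

lemma ne_center_right (h : PerfectCode G c φ) {a b : V} (hab : G.Adj a b) (hne : φ a ≠ φ b) :
    b ≠ c (φ b) :=
  h.ne_center_left hab.symm hne.symm

lemma apply_ne_of_adj (h : PerfectCode G c φ) (hG : G.IsAcyclic) {a b : V} (hab : G.Adj a b)
    (ha : a ≠ c (φ a)) (hb : b ≠ c (φ b)) : φ a ≠ φ b :=
  fun he => not_reachable_deleteEdges hG hab (h.reachable_deleteEdges ha hb he)

/-- There is at most one edge between two distinct closed neighborhoods of the code. -/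
lemma eq_of_adj_of_adj (h : PerfectCode G c φ) (hG : G.IsAcyclic) {a b a' b' : V}
    (hab : G.Adj a b) (hab' : G.Adj a' b') (haa : φ a = φ a') (hbb : φ b = φ b')
    (hne : φ a ≠ φ b) : a = a' ∧ b = b' := by
  by_contra hcon
  have ha := h.ne_center_left hab hne
  have hb := h.ne_center_right hab hne
  have hadj : (G.deleteEdges {s(a, b)}).Adj a' b' := by
    rw [deleteEdges_adj]
    refine ⟨hab', fun he => ?_⟩
    rcases Sym2.eq_iff.mp he with ⟨rfl, rfl⟩ | ⟨rfl, rfl⟩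
    · exact hcon ⟨rfl, rfl⟩
    · exact hne haa
  exact not_reachable_deleteEdges hG hab ((h.reachable_deleteEdges ha hb haa).trans
    (hadj.reachable.trans (h.reachable_deleteEdges ha hb hbb.symm)))

lemma isTree_quotientGraph (h : PerfectCode G c φ) (hG : G.IsTree) :
    (quotientGraph G φ).IsTree := by
  obtain ⟨v⟩ := hG.connected.nonempty
  refine ⟨(connected_iff _).mpr ⟨fun i j => ?_, ⟨φ v⟩⟩, ?_⟩
  · have hproj : ∀ {x y}, G.Walk x y → (quotientGraph G φ).Reachable (φ x) (φ y) := by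
      intro x y p
      induction p with
      | nil => rfl
      | @cons x y z hxy _ ih =>
        refine Reachable.trans ?_ ih
        by_cases he : φ x = φ y
        · rw [he]
        · exact (quotientGraph_adj.mpr ⟨he, x, y, hxy, rfl, rfl⟩).reachable
    obtain ⟨p⟩ := hG.connected (c i) (c j)
    rw [← h.apply_center i, ← h.apply_center j]
    exact hproj p
  · rw [isAcyclic_iff_forall_adj_isBridge]
    intro i j hij
    obtain ⟨hne, a, b, hab, rfl, rfl⟩ := quotientGraph_adj.mp hij
    rw [isBridge_iff]
    rintro ⟨p⟩
    have ha := h.ne_center_left hab hne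
    have hb := h.ne_center_right hab hne
    have hlift : ∀ {i j}, ((quotientGraph G φ).deleteEdges {s(φ a, φ b)}).Walk i j →
        (G.deleteEdges {s(a, b)}).Reachable (c i) (c j) := by
      intro i j p
      induction p with
      | nil => rfl
      | cons hxy _ ih =>
        refine Reachable.trans ?_ ih
        rw [deleteEdges_adj] at hxy
        obtain ⟨hxy, hdel⟩ := hxy
        obtain ⟨-, x, y, hadj, rfl, rfl⟩ := quotientGraph_adj.mp hxy
        refine (h.reachable_deleteEdges ha hb (h.apply_center _)).trans
          (Reachable.trans (Adj.reachable ?_)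
            (h.reachable_deleteEdges ha hb (h.apply_center _).symm))
        rw [deleteEdges_adj]
        refine ⟨hadj, fun he => hdel ?_⟩
        exact congrArg (Sym2.map φ) he
    exact not_reachable_deleteEdges hG.isAcyclic hab
      ((h.reachable_deleteEdges ha hb (h.apply_center _).symm).trans
        ((hlift p).trans (h.reachable_deleteEdges ha hb (h.apply_center _))))

/-- The indices of the other closed neighborhoods met by the neighbors of `w`. -/
def outerIndices (G : SimpleGraph V) (φ : V → ι) (w : V) : Set ι :=
  {j | φ w ≠ j ∧ ∃ b, G.Adj w b ∧ φ b = j}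

lemma eq_of_mem_outerIndices (h : PerfectCode G c φ) (hG : G.IsAcyclic) {w w' : V} {j : ι}
    (hww : φ w = φ w') (hj : j ∈ outerIndices G φ w) (hj' : j ∈ outerIndices G φ w') :
    w = w' := by
  obtain ⟨hne, b, hb, rfl⟩ := hj
  obtain ⟨-, b', hb', hbb⟩ := hj'
  exact (h.eq_of_adj_of_adj hG hb hb' hww hbb.symm hne).1

/-- The neighborhood partition of the quotient graph whose classes correspond to the
vertices outside the code. -/
def nbhdPartition (h : PerfectCode G c φ) (hG : G.IsAcyclic)
    (hout : ∀ w, w ≠ c (φ w) → (outerIndices G φ w).Nonempty) :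
    NbhdPartition (quotientGraph G φ) where
  part i := {A | ∃ w, w ≠ c (φ w) ∧ φ w = i ∧ outerIndices G φ w = A}
  nonempty := by
    rintro _ _ ⟨w, hw, -, rfl⟩
    exact hout w hw
  subset_nbhd := by
    rintro _ _ ⟨w, -, rfl, rfl⟩ j ⟨hne, b, hb, hbj⟩
    exact quotientGraph_adj.mpr ⟨hne, w, b, hb, rfl, hbj⟩
  covers := by
    intro i j hij
    obtain ⟨hne, a, b, hab, rfl, rfl⟩ := quotientGraph_adj.mp hij
    exact ⟨_, ⟨a, h.ne_center_left hab hne, rfl, rfl⟩, hne, b, hab, rfl⟩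
  eq_of_inter := by
    rintro i _ ⟨w, -, hw, rfl⟩ _ ⟨w', -, hw', rfl⟩ ⟨j, hj, hj'⟩
    rw [h.eq_of_mem_outerIndices hG (hw.trans hw'.symm) hj hj']

open Classical in
/-- The map from a graph with a perfect code to the corona of the quotient graph. -/
noncomputable def toCorona (h : PerfectCode G c φ) (hG : G.IsAcyclic)
    (hout : ∀ w, w ≠ c (φ w) → (outerIndices G φ w).Nonempty) (w : V) :
    CoronaVert (quotientGraph G φ) (h.nbhdPartition hG hout) :=
  if hw : w = c (φ w) then Sum.inl (φ w)
  else Sum.inr ⟨(φ w, outerIndices G φ w), w, hw, rfl, rfl⟩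

lemma nonempty_iso_corona (h : PerfectCode G c φ) (hG : G.IsAcyclic)
    (hout : ∀ w, w ≠ c (φ w) → (outerIndices G φ w).Nonempty) :
    Nonempty (G ≃g corona (quotientGraph G φ) (h.nbhdPartition hG hout)) := by
  have hpos : ∀ {w}, w = c (φ w) → h.toCorona hG hout w = Sum.inl (φ w) :=
    fun hw => dif_pos hw
  have hneg : ∀ {w} (hw : w ≠ c (φ w)), h.toCorona hG hout w =
      Sum.inr ⟨(φ w, outerIndices G φ w), w, hw, rfl, rfl⟩ :=
    fun hw => dif_neg hw
  have hbij : Function.Bijective (h.toCorona hG hout) := by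
    refine ⟨fun w w' hww => ?_, ?_⟩
    · by_cases hw : w = c (φ w) <;> by_cases hw' : w' = c (φ w')
      · rw [hpos hw, hpos hw'] at hww
        rw [hw, hw', Sum.inl.inj hww]
      · simp [hpos hw, hneg hw'] at hww
      · simp [hneg hw, hpos hw'] at hww
      · rw [hneg hw, hneg hw'] at hww
        obtain ⟨hφ, hA⟩ := Prod.mk.inj (congrArg Subtype.val (Sum.inr.inj hww))
        obtain ⟨j, hj⟩ := hout w hw
        exact h.eq_of_mem_outerIndices hG hφ hj (Set.ext_iff.mp hA j |>.mp hj)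
    · rintro (i | ⟨⟨i, A⟩, w, hw, hi, hA⟩)
      · refine ⟨c i, ?_⟩
        rw [hpos (by rw [h.apply_center]), h.apply_center]
      · refine ⟨w, (hneg hw).trans (congrArg Sum.inr (Subtype.ext ?_))⟩
        exact Prod.ext hi hA
  refine ⟨Equiv.ofBijective _ hbij, fun {w w'} => ?_⟩
  rw [Equiv.ofBijective_apply, Equiv.ofBijective_apply]
  have hcenter : ∀ {x y}, x = c (φ x) → y ≠ c (φ y) → (G.Adj x y ↔ φ x = φ y) := by
    intro x y hx hy
    refine ⟨fun hxy => (h.apply_eq_of_adj (hx ▸ hxy)).symm, fun he => ?_⟩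
    rw [hx, he]
    exact h.adj_center hy
  by_cases hw : w = c (φ w) <;> by_cases hw' : w' = c (φ w')
  · have hnot : ¬ G.Adj w w' := by
      intro hadj
      have he : φ w' = φ w := h.apply_eq_of_adj (hw ▸ hadj)
      exact hadj.ne (by rw [hw, hw', he])
    simp [hpos hw, hpos hw', corona, hnot]
  · simp [hpos hw, hneg hw', corona, hcenter hw hw']
  · simp [hneg hw, hpos hw', corona, G.adj_comm w w', hcenter hw' hw, eq_comm]
  · rw [hneg hw, hneg hw']
    simp only [corona, fromRel_adj]
    constructor
    · rintro ⟨-, ⟨-, ⟨hne, b, hb, hbj⟩, -, b', hb', hbj'⟩ | ⟨-, ⟨-, b', hb', hbj'⟩, hne, b, hb, hbj⟩⟩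
      all_goals
        obtain ⟨-, rfl⟩ := h.eq_of_adj_of_adj hG hb hb'.symm hbj'.symm hbj (hbj ▸ hne)
        exact hb
    · intro hadj
      have hne := h.apply_ne_of_adj hG hadj hw hw'
      refine ⟨?_, Or.inl ⟨quotientGraph_adj.mpr ⟨hne, w, w', hadj, rfl, rfl⟩,
        ⟨hne, w', hadj, rfl⟩, hne.symm, w, hadj.symm, rfl⟩⟩
      intro he
      exact hne (congrArg (fun p => p.val.1) (Sum.inr.inj he))

end PerfectCode

/-- If a finite tree `T` with at least three vertices has domination
subdivision number 3, then `T` is a general corona of a tree. -/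
theorem isGeneralCorona_of_sd_eq_three {V : Type u} [Fintype V]
    (T : SimpleGraph V) (hT : T.IsTree) (h3 : 3 ≤ Fintype.card V)
    (h : sd T = 3) : IsGeneralCoronaOfTree T := by
  have hsd : 2 < sd T := by omega
  obtain ⟨S, hS, hcard⟩ := IsTree.exists_packing_ncard_eq hT
  have hcode := hS.exists_mem_closedNbhd hT.connected hsd hcard
  let e := (Finite.equivFin S).symm
  have hφ : ∀ w, ∃ i, w ∈ closedNbhd T (e i) := by
    intro w
    obtain ⟨s, hs, hw⟩ := hcode w
    exact ⟨e.symm ⟨s, hs⟩, by rwa [e.apply_symm_apply]⟩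
  choose φ hφ using hφ
  have hP : PerfectCode T (fun i => (e i : V)) φ := by
    refine ⟨fun w i => ⟨fun hw => ?_, fun hw => hw ▸ hφ w⟩⟩
    exact e.injective (Subtype.ext (hS (e _).2 (e _).2 (hφ w) hw))
  have hout : ∀ w, w ≠ (e (φ w) : V) → (PerfectCode.outerIndices T φ w).Nonempty := by
    intro w hw
    have hwS : w ∉ S := fun h => hw (hS h (e _).2 (Or.inl rfl) (hφ w))
    have hleaf : ¬ IsLeaf T w := fun hl =>
      hwS (hS.mem_of_isLeaf hT.connected (by rwa [Nat.card_eq_fintype_card]) hsd hcard hl)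
    have hadj : T.Adj (e (φ w)) w := hP.adj_center hw
    obtain ⟨b, hb, hbe⟩ : ∃ b, T.Adj w b ∧ b ≠ e (φ w) := by
      by_contra! hno
      refine hleaf (Set.ncard_eq_one.mpr ⟨e (φ w), Set.ext fun x => ⟨hno x, ?_⟩⟩)
      rintro rfl
      exact hadj.symm
    have hbc : b ≠ e (φ b) := by
      intro hbb
      have hwb : φ w = φ b := hP.apply_eq_of_adj (i := φ b) (hbb ▸ hb.symm)
      exact hbe (hwb ▸ hbb)
    exact ⟨φ b, hP.apply_ne_of_adj hT.isAcyclic hb hw hbc, b, hb, rfl⟩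
  exact ⟨_, _, hP.nbhdPartition hT.isAcyclic hout, hP.isTree_quotientGraph hT,
    hP.nonempty_iso_corona hT.isAcyclic hout⟩

end GenCorona
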